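/- There exist absolute constants 0 < c ≤ C such that for every θ ∈ (0,1) and every positive integer n, c · n^{(3-θ)/2} θ^{-1} (1-θ)^{-2} ≤ ∫_{A} G(s,t,u,v) ds dt du dv ≤ C · n^{(3-θ)/2} θ^{-1} (1-θ)^{-2}, where A = { (s,t,u,v) ∈ (0,∞)⁴ : 0 < u < 1, v ≥ n^{1/2}, t < 1, s ≥ n^{1/4} u^{1/2} t }. -/

import Mathlib

open MeasureTheory Set Real

/-- The integrand `G(s,t,u,v)` from the paper's computation of the completely 1-summing
norm of the identity `OH_n → ℓ^n_p`, with `θ = 2/p'`. Here `p = (s, t, u, v)`. -/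
noncomputable def G (θ : ℝ) (n : ℕ) (p : ℝ × ℝ × ℝ × ℝ) : ℝ :=
  (n : ℝ) ^ (2 : ℕ) * p.1 ^ (-1 - 2 * θ) * p.2.1 ^ (-1 - 2 * θ) *
    min (min (min ((n : ℝ)⁻¹ * p.1 ^ (4 : ℝ) * p.2.2.1 ^ (-2 : ℝ) * p.2.2.2 ^ (-2 : ℝ))
                  ((n : ℝ)⁻¹ * p.2.1 ^ (4 : ℝ)))
             (min (p.1 ^ (4 : ℝ) * p.2.2.1 ^ (-2 : ℝ)) (p.2.1 ^ (4 : ℝ) * p.2.2.2 ^ (-2 : ℝ))))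
        (min (min (p.2.2.1 ^ (-2 : ℝ) * p.2.2.2 ^ (-2 : ℝ)) (p.2.2.1 ^ (-2 : ℝ)))
             (min 1 (p.2.2.2 ^ (-2 : ℝ))))

/-- The region of integration. -/
def A (n : ℕ) : Set (ℝ × ℝ × ℝ × ℝ) :=
  {p | 0 < p.1 ∧ 0 < p.2.1 ∧ 0 < p.2.2.1 ∧ 0 < p.2.2.2 ∧ p.2.2.1 < 1 ∧ (n : ℝ) ^ ((1:ℝ)/2) ≤ p.2.2.2 ∧ p.2.1 < 1 ∧ (n : ℝ) ^ ((1:ℝ)/4) * p.2.2.1 ^ ((1:ℝ)/2) * p.2.1 ≤ p.1}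


lemma aux_Ioo (r : ℝ) (hr : -1 < r) :
    ∫⁻ t in Ioo (0:ℝ) 1, ENNReal.ofReal (t ^ r) = ENNReal.ofReal (1 / (r + 1)) := by
  have h1 : IntegrableOn (fun t : ℝ => t ^ r) (Ioc 0 1) := by
    have := intervalIntegral.intervalIntegrable_rpow' (a := 0) (b := 1) hr
    rwa [intervalIntegrable_iff_integrableOn_Ioc_of_le zero_le_one] at this
  rw [restrict_Ioo_eq_restrict_Ioc, ← ofReal_integral_eq_lintegral_ofReal h1]
  · rw [← intervalIntegral.integral_of_le zero_le_one, integral_rpow (Or.inl hr)]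
    rw [one_rpow, zero_rpow (by linarith), sub_zero]
  · filter_upwards [ae_restrict_mem measurableSet_Ioc] with t ht
    exact rpow_nonneg ht.1.le _

lemma aux_Ici (a r : ℝ) (ha : 0 < a) (hr : r < -1) :
    ∫⁻ t in Ici a, ENNReal.ofReal (t ^ r) = ENNReal.ofReal (-a ^ (r + 1) / (r + 1)) := by
  rw [← restrict_Ioi_eq_restrict_Ici,
    ← ofReal_integral_eq_lintegral_ofReal (integrableOn_Ioi_rpow_of_lt hr ha)]
  · rw [integral_Ioi_rpow_of_lt hr ha]
  · filter_upwards [ae_restrict_mem measurableSet_Ioi] with t ht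
    exact rpow_nonneg (ha.trans ht).le _

lemma aux_meas_A (n : ℕ) : MeasurableSet (A n) := by
  have h1 : MeasurableSet {p : ℝ × ℝ × ℝ × ℝ | 0 < p.1} :=
    measurableSet_lt (by fun_prop) (by fun_prop)
  have h2 : MeasurableSet {p : ℝ × ℝ × ℝ × ℝ | 0 < p.2.1} :=
    measurableSet_lt (by fun_prop) (by fun_prop)
  have h3 : MeasurableSet {p : ℝ × ℝ × ℝ × ℝ | 0 < p.2.2.1} :=
    measurableSet_lt (by fun_prop) (by fun_prop)
  have h4 : MeasurableSet {p : ℝ × ℝ × ℝ × ℝ | 0 < p.2.2.2} :=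
    measurableSet_lt (by fun_prop) (by fun_prop)
  have h5 : MeasurableSet {p : ℝ × ℝ × ℝ × ℝ | p.2.2.1 < 1} :=
    measurableSet_lt (by fun_prop) (by fun_prop)
  have h6 : MeasurableSet {p : ℝ × ℝ × ℝ × ℝ | (n : ℝ) ^ ((1:ℝ)/2) ≤ p.2.2.2} :=
    measurableSet_le (by fun_prop) (by fun_prop)
  have h7 : MeasurableSet {p : ℝ × ℝ × ℝ × ℝ | p.2.1 < 1} :=
    measurableSet_lt (by fun_prop) (by fun_prop)
  have h8 : MeasurableSet {p : ℝ × ℝ × ℝ × ℝ |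
      (n : ℝ) ^ ((1:ℝ)/4) * p.2.2.1 ^ ((1:ℝ)/2) * p.2.1 ≤ p.1} :=
    measurableSet_le (by fun_prop) (by fun_prop)
  exact h1.inter (h2.inter (h3.inter (h4.inter (h5.inter (h6.inter (h7.inter h8))))))

lemma aux_min (n : ℕ) (hn : 0 < n) (s t u v : ℝ) (h : (s, t, u, v) ∈ A n) (θ : ℝ) :
    G θ n (s, t, u, v) = (n:ℝ)^2 * t ^ (3 - 2 * θ) * v ^ (-2:ℝ) * s ^ (-1 - 2 * θ) := by
  obtain ⟨hs, ht, hu, hv, hu1, hvn, ht1, hst⟩ := h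
  simp only at hs ht hu hv hu1 hvn ht1 hst
  have hn1 : (1:ℝ) ≤ n := by exact_mod_cast hn
  have hn0 : (0:ℝ) < n := by linarith
  have hv2 : (n:ℝ) ≤ v ^ 2 := by
    have := pow_le_pow_left₀ (by positivity) hvn 2
    rwa [← rpow_natCast, ← rpow_mul hn0.le, show (1:ℝ)/2 * (2:ℕ) = 1 by norm_num, rpow_one] at this
  have hs4 : n * u ^ 2 * t ^ 4 ≤ s ^ 4 := by
    have := pow_le_pow_left₀ (by positivity) hst 4
    rw [mul_pow, mul_pow, ← rpow_natCast ((n:ℝ) ^ _), ← rpow_mul hn0.le,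
      ← rpow_natCast (u ^ _), ← rpow_mul hu.le, show (1:ℝ)/4 * (4:ℕ) = 1 by norm_num, rpow_one,
      show (1:ℝ)/2 * (4:ℕ) = (2:ℕ) by norm_num, rpow_natCast] at this
    exact this
  have e : ∀ x : ℝ, 0 < x → x ^ (-2:ℝ) = (x^2)⁻¹ := fun x hx => by
    rw [rpow_neg hx.le]; norm_cast
  have e4 : ∀ x : ℝ, x ^ (4:ℝ) = x^4 := fun x => by norm_cast
  have ht4 : t ^ 4 ≤ 1 := pow_le_one₀ ht.le ht1.le
  have hu2 : u ^ 2 ≤ 1 := pow_le_one₀ hu.le hu1.le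
  have hv1 : 1 ≤ v ^ 2 := by linarith
  have hui : 1 ≤ (u^2)⁻¹ := (one_le_inv₀ (by positivity)).2 hu2
  have hvi : (v^2)⁻¹ ≤ 1 := inv_le_one_of_one_le₀ hv1
  have hvn' : (v^2)⁻¹ ≤ (n:ℝ)⁻¹ := inv_anti₀ hn0 hv2
  have hvp : 0 < (v^2)⁻¹ := by positivity
  have htv : t ^ 4 * (v^2)⁻¹ ≤ (v^2)⁻¹ := mul_le_of_le_one_left hvp.le ht4
  have hsu : n * t ^ 4 ≤ s ^ 4 * (u^2)⁻¹ := by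
    rw [← div_eq_mul_inv, le_div_iff₀ (by positivity)]; linarith
  have ht40 : 0 < t ^ 4 := by positivity
  have h1 : t ^ 4 * (v^2)⁻¹ ≤ (n:ℝ)⁻¹ * s ^ 4 * (u^2)⁻¹ * (v^2)⁻¹ := by
    refine mul_le_mul_of_nonneg_right ?_ hvp.le
    rw [mul_assoc, ← div_eq_inv_mul, le_div_iff₀ hn0]; linarith
  have h2 : t ^ 4 * (v^2)⁻¹ ≤ (n:ℝ)⁻¹ * t ^ 4 := by
    rw [mul_comm]; exact mul_le_mul_of_nonneg_right hvn' ht40.le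
  have h3 : t ^ 4 * (v^2)⁻¹ ≤ s ^ 4 * (u^2)⁻¹ := by nlinarith
  have h4 : t ^ 4 * (v^2)⁻¹ ≤ (u^2)⁻¹ * (v^2)⁻¹ := by nlinarith
  have key : G θ n (s, t, u, v) =
      (n:ℝ)^2 * s ^ (-1 - 2 * θ) * t ^ (-1 - 2 * θ) * (t ^ 4 * (v^2)⁻¹) := by
    unfold G
    simp only [e u hu, e v hv, e4]
    congr 1
    apply le_antisymm
    · exact (min_le_left _ _).trans ((min_le_right _ _).trans (min_le_right _ _))
    · refine le_min (le_min (le_min h1 h2) (le_min h3 le_rfl)) (le_min (le_min h4 ?_) (le_min ?_ htv))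
      all_goals linarith
  rw [key, e v hv, show 3 - 2 * θ = (-1 - 2 * θ) + (4:ℕ) by push_cast; ring, rpow_add ht,
    rpow_natCast]
  ring

lemma aux_inner (θ : ℝ) (h0 : 0 < θ) (n : ℕ) (hn : 0 < n) (y : ℝ × ℝ × ℝ) :
    ∫⁻ s : ℝ, (A n).indicator (fun p => ENNReal.ofReal (G θ n p)) (s, y) =
    (Ioo (0:ℝ) 1 ×ˢ (Ioo (0:ℝ) 1 ×ˢ Ici ((n:ℝ) ^ ((1:ℝ)/2)))).indicator (fun y =>
      ENNReal.ofReal ((n:ℝ)^2 * (n:ℝ) ^ (-θ/2) / (2 * θ)) * (ENNReal.ofReal (y.1 ^ (3 - 4 * θ)) *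
        (ENNReal.ofReal (y.2.1 ^ (-θ)) * ENNReal.ofReal (y.2.2 ^ (-2:ℝ))))) y := by
  obtain ⟨t, u, v⟩ := y
  have hn0 : (0:ℝ) < n := by exact_mod_cast hn
  by_cases hy : (t, u, v) ∈ (Ioo (0:ℝ) 1 ×ˢ (Ioo (0:ℝ) 1 ×ˢ Ici ((n:ℝ) ^ ((1:ℝ)/2))))
  · rw [indicator_of_mem hy]
    obtain ⟨⟨ht, ht1⟩, ⟨hu, hu1⟩, hvn⟩ := hy
    simp only [mem_Ici] at ht ht1 hu hu1 hvn
    have hv : 0 < v := lt_of_lt_of_le (by positivity) hvn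
    set a := (n : ℝ) ^ ((1:ℝ)/4) * u ^ ((1:ℝ)/2) * t with ha
    have ha0 : 0 < a := by positivity
    have : ∀ s : ℝ, (A n).indicator (fun p => ENNReal.ofReal (G θ n p)) (s, t, u, v) =
        (Ici a).indicator (fun s => ENNReal.ofReal ((n:ℝ)^2 * t ^ (3 - 2 * θ) * v ^ (-2:ℝ)) *
          ENNReal.ofReal (s ^ (-1 - 2 * θ))) s := by
      intro s
      by_cases hs : a ≤ s
      · have hm : (s, t, u, v) ∈ A n := ⟨ha0.trans_le hs, ht, hu, hv, hu1, hvn, ht1, hs⟩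
        rw [indicator_of_mem hm, indicator_of_mem (show s ∈ Ici a from hs), aux_min n hn s t u v hm,
          ENNReal.ofReal_mul (by positivity)]
      · rw [indicator_of_notMem, indicator_of_notMem (show s ∉ Ici a from hs)]
        exact fun hm => hs hm.2.2.2.2.2.2.2
    simp_rw [this]
    rw [lintegral_indicator measurableSet_Ici, lintegral_const_mul _ (by fun_prop),
      aux_Ici a _ ha0 (by linarith), ← ENNReal.ofReal_mul (by positivity),
      ← ENNReal.ofReal_mul (by positivity), ← ENNReal.ofReal_mul (by positivity),
      ← ENNReal.ofReal_mul (by positivity)]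
    congr 1
    rw [show -1 - 2 * θ + 1 = -2 * θ by ring, ha, mul_rpow (by positivity) ht.le,
      mul_rpow (by positivity) (by positivity), ← rpow_mul hn0.le, ← rpow_mul hu.le,
      show (1:ℝ)/4 * (-2 * θ) = -θ/2 by ring, show (1:ℝ)/2 * (-2 * θ) = -θ by ring,
      show 3 - 4 * θ = (3 - 2 * θ) + (-2 * θ) by ring, rpow_add ht]
    field_simp
  · rw [indicator_of_notMem hy]
    rw [← lintegral_zero (μ := (volume : Measure ℝ))]
    congr 1
    ext s
    rw [indicator_of_notMem]
    rintro ⟨hs, ht, hu, hv, hu1, hvn, ht1, hst⟩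
    exact hy ⟨⟨ht, ht1⟩, ⟨hu, hu1⟩, hvn⟩

lemma aux_measG (θ : ℝ) (n : ℕ) : Measurable (G θ n) := by
  unfold G
  fun_prop

lemma aux_total (θ : ℝ) (h0 : 0 < θ) (h1 : θ < 1) (n : ℕ) (hn : 0 < n) :
    ∫ p in A n, G θ n p =
      1 / 8 * ((n : ℝ) ^ ((3 - θ) / 2) * θ ^ (-1 : ℝ) * (1 - θ) ^ (-2 : ℝ)) := by
  have hn0 : (0:ℝ) < n := by exact_mod_cast hn
  have h1' : 0 < 1 - θ := by linarith
  rw [integral_eq_lintegral_of_nonneg_ae]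
  rotate_left
  · filter_upwards [ae_restrict_mem (aux_meas_A n)] with p hp
    obtain ⟨s, t, u, v⟩ := p
    rw [aux_min n hn s t u v hp]
    obtain ⟨hs, ht, hu, hv, -⟩ := hp
    simp only at hs ht hu hv
    simp only [Pi.zero_apply]
    positivity
  · exact (aux_measG θ n).aestronglyMeasurable
  have hm : Measurable ((A n).indicator (fun p => ENNReal.ofReal (G θ n p))) :=
    (aux_measG θ n).ennreal_ofReal.indicator (aux_meas_A n)
  rw [← lintegral_indicator (aux_meas_A n), Measure.volume_eq_prod,
    lintegral_prod_symm _ hm.aemeasurable]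
  simp_rw [aux_inner θ h0 n hn]
  rw [lintegral_indicator (measurableSet_Ioo.prod (measurableSet_Ioo.prod measurableSet_Ici)),
    lintegral_const_mul _ (by fun_prop), Measure.volume_eq_prod, ← Measure.prod_restrict,
    lintegral_prod_mul (f := fun t : ℝ => ENNReal.ofReal (t ^ (3 - 4 * θ)))
      (g := fun y : ℝ × ℝ => ENNReal.ofReal (y.1 ^ (-θ)) * ENNReal.ofReal (y.2 ^ (-2:ℝ)))
      (by fun_prop) (by fun_prop),
    Measure.volume_eq_prod, ← Measure.prod_restrict,
    lintegral_prod_mul (f := fun t : ℝ => ENNReal.ofReal (t ^ (-θ)))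
      (g := fun y : ℝ => ENNReal.ofReal (y ^ (-2:ℝ))) (by fun_prop) (by fun_prop),
    aux_Ioo _ (by linarith), aux_Ioo _ (by linarith), aux_Ici _ _ (by positivity) (by norm_num)]
  have p1 : 0 < 3 - 4 * θ + 1 := by linarith
  have p2 : 0 < -θ + 1 := by linarith
  have p3 : -((n:ℝ) ^ ((1:ℝ)/2)) ^ (-2 + 1 : ℝ) / (-2 + 1) = (n:ℝ) ^ (-(1:ℝ)/2) := by
    rw [← rpow_mul hn0.le, show (1:ℝ)/2 * (-2 + 1) = -1/2 by norm_num]; norm_num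
  rw [p3, ← ENNReal.ofReal_mul (by positivity), ← ENNReal.ofReal_mul (by positivity),
      ← ENNReal.ofReal_mul (by positivity), ENNReal.toReal_ofReal (by positivity),
      show (3 - θ) / 2 = (2:ℕ) + (-θ/2) + (-(1:ℝ)/2) by push_cast; ring, rpow_add hn0, rpow_add hn0,
      rpow_natCast, rpow_neg_one, rpow_neg h1'.le, rpow_two,
      show 3 - 4 * θ + 1 = 4 * (1 - θ) by ring, show -θ + 1 = 1 - θ by ring]
  field_simp
  norm_num

theorem stmt_12 :
    ∃ c C : ℝ, 0 < c ∧ c ≤ C ∧ ∀ θ : ℝ, 0 < θ → θ < 1 → ∀ n : ℕ, 0 < n →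
      c * ((n : ℝ) ^ ((3 - θ) / 2) * θ ^ (-1 : ℝ) * (1 - θ) ^ (-2 : ℝ)) ≤ (∫ p in A n, G θ n p) ∧
      (∫ p in A n, G θ n p) ≤ C * ((n : ℝ) ^ ((3 - θ) / 2) * θ ^ (-1 : ℝ) * (1 - θ) ^ (-2 : ℝ)) := by
  refine ⟨1/8, 1/8, by norm_num, le_rfl, fun θ h0 h1 n hn => ?_⟩
  rw [aux_total θ h0 h1 n hn]
  exact ⟨le_rfl, le_rfl⟩
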